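/- Let H : D → ℝ be symmetric (invariant under every permutation of its three arguments) on D, satisfy the entropy equation H(x,y,z) = H(x+y,0,z) + H(x,y,0) for all (x,y,z) in the interior of D, and suppose the map (x,y) ↦ H(x,y,0) is positively homogeneous of degree 1 on ℝ₊₊² (i.e. H(tx,ty,0) = t·H(x,y,0) for all t,x,y > 0). Then there exists a function φ : ℝ₊₊ → ℝ such that φ(xy) = x·φ(y) + y·φ(x) for all x,y > 0 and H(x,y,z) = φ(x+y+z) − φ(x) − φ(y) − φ(z) for all (x,y,z) in the interior of D. -/

import Mathlib

/-!
By symmetry, the entropy equation says that `F(x, y) = H(x, y, 0)` is a symmetric 2-cocycle on the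
additive semigroup of positive elements. The target is a divisible group, so the abelian extension
attached to `F` splits: `F(x, y) = ψ(x + y) - ψ(x) - ψ(y)`, and `ψ` may be taken odd on the whole
field. Homogeneity of `F` then says that the Leibniz defect `D(x, y) = ψ(xy) - xψ(y) - yψ(x)` is
biadditive, hence a symmetric Hochschild 2-cocycle, that is, the datum of a commutative square-zero
ring extension of the field. A field of characteristic zero is formally smooth over `ℤ`, so this
extension splits too: `D(x, y) = β(xy) - xβ(y) - yβ(x)` with `β` additive, and `φ = ψ - β` is the
required function.
-/

open Algebra Function

/-! ### Symmetric additive cocycles -/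

section AddCocycle

variable {S M : Type*} [AddCommSemigroup S] [AddCommGroup M]

/-- `F` is a symmetric 2-cocycle on the additive semigroup `S` with values in `M`, so that it
defines a commutative extension of `S` by `M`. -/
structure IsSymmAddCocycle (F : S → S → M) : Prop where
  comm : ∀ x y, F x y = F y x
  cocycle : ∀ x y z, F (x + y) z + F x y = F x (y + z) + F y z

variable {F : S → S → M}

/-- The extension of `S` by `M` attached to a symmetric cocycle `F`: the set `S × M` with the
addition `(x, a) + (y, b) = (x + y, a + b + F x y)`. The type depends on the cocycle property so
that the instances below can find it. -/
structure AddCocycleExtension (_hF : IsSymmAddCocycle F) where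
  base : S
  fiber : M

namespace AddCocycleExtension

variable {hF : IsSymmAddCocycle F}

instance : Add (AddCocycleExtension hF) where
  add p q := ⟨p.base + q.base, p.fiber + q.fiber + F p.base q.base⟩

lemma mk_add_mk (x y : S) (a b : M) :
    (⟨x, a⟩ + ⟨y, b⟩ : AddCocycleExtension hF) = ⟨x + y, a + b + F x y⟩ := rfl

instance : AddCommSemigroup (AddCocycleExtension hF) where
  add_assoc := by
    rintro ⟨x, a⟩ ⟨y, b⟩ ⟨z, c⟩
    simp only [mk_add_mk, mk.injEq, add_assoc x y z, true_and]
    linear_combination (norm := module) hF.cocycle x y z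
  add_comm := by
    rintro ⟨x, a⟩ ⟨y, b⟩
    simp only [mk_add_mk, add_comm x y, add_comm a b, hF.comm x y]

/-- The canonical map to the group completion. A zero is adjoined first because `S` need not have
one. -/
def toGroup (p : AddCocycleExtension hF) :
    GrothendieckAddGroup (WithZero (AddCocycleExtension hF)) :=
  GrothendieckAddGroup.of (p : WithZero (AddCocycleExtension hF))

lemma toGroup_add (p q : AddCocycleExtension hF) : toGroup (p + q) = toGroup p + toGroup q := by
  simp only [toGroup, WithZero.coe_add, map_add]

lemma toGroup_mk_injective (x : S) :
    Injective fun a ↦ toGroup (⟨x, a⟩ : AddCocycleExtension hF) := by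
  intro a b hab
  obtain ⟨⟨c, _⟩, hc⟩ := (AddLocalization.addMonoidOf ⊤).eq_iff_exists.1 hab
  induction c using WithZero.recZeroCoe with
  | zero => simpa using hc
  | coe c =>
    obtain ⟨y, d⟩ := c
    simpa [← WithZero.coe_add, mk_add_mk] using hc

lemma toGroup_mk_add_toGroup_mk (x y : S) (a b : M) :
    toGroup (⟨x, a⟩ : AddCocycleExtension hF) + toGroup (⟨y, b⟩ : AddCocycleExtension hF) =
      toGroup (⟨x, 0⟩ : AddCocycleExtension hF) + toGroup ⟨y, a + b⟩ := by
  simp only [← toGroup_add, mk_add_mk, zero_add]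

/-- The embedding of the kernel `M` of the extension into its group completion; it does not depend
on the base point `s`. -/
def kernelHom (hF : IsSymmAddCocycle F) (s : S) :
    M →+ GrothendieckAddGroup (WithZero (AddCocycleExtension hF)) :=
  AddMonoidHom.mk' (fun a ↦ toGroup ⟨s, a⟩ - toGroup ⟨s, 0⟩) fun a b ↦ by
    have h := toGroup_mk_add_toGroup_mk (hF := hF) s s a b
    rw [sub_add_sub_comm, h, add_sub_add_left_eq_sub]

lemma kernelHom_injective (s : S) : Injective (kernelHom hF s) := fun _ _ h ↦
  toGroup_mk_injective s (sub_left_injective h)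

lemma toGroup_mk (s x : S) (a : M) :
    toGroup (⟨x, a⟩ : AddCocycleExtension hF) = toGroup ⟨x, 0⟩ + kernelHom hF s a := by
  have h := toGroup_mk_add_toGroup_mk (hF := hF) x s a 0
  rw [add_zero] at h
  rw [kernelHom, AddMonoidHom.mk'_apply, ← add_sub_assoc, ← h, add_sub_cancel_right]

end AddCocycleExtension

open AddCocycleExtension in
theorem IsSymmAddCocycle.exists_eq_coboundary (hM : Module.Baer ℤ M) (hF : IsSymmAddCocycle F) :
    ∃ ψ : S → M, ∀ x y, F x y = ψ (x + y) - ψ x - ψ y := by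
  rcases isEmpty_or_nonempty S with hS | ⟨⟨s⟩⟩
  · exact ⟨0, fun x ↦ hS.elim x⟩
  obtain ⟨r, hr⟩ := hM.extension_property_addMonoidHom (kernelHom hF s)
    (kernelHom_injective s) (AddMonoidHom.id M)
  have retract (a : M) : r (kernelHom hF s a) = a := DFunLike.congr_fun hr a
  refine ⟨fun x ↦ -r (toGroup ⟨x, 0⟩), fun x y ↦ ?_⟩
  have h : r (toGroup ⟨x, 0⟩) + r (toGroup ⟨y, 0⟩) = r (toGroup ⟨x + y, 0⟩) + F x y := by
    rw [← map_add, ← toGroup_add, mk_add_mk, toGroup_mk s, map_add, retract, add_zero, zero_add]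
  linear_combination (norm := module) -h

end AddCocycle

lemma baer_int_of_charZero (K M : Type*) [DivisionRing K] [CharZero K] [AddCommGroup M]
    [Module K M] : Module.Baer ℤ M := by
  let _ : DivisibleBy M ℤ :=
    { div a n := (n : K)⁻¹ • a
      div_zero a := by simp
      div_cancel {n} a hn := by
        rw [← Int.cast_smul_eq_zsmul K, smul_inv_smul₀ (Int.cast_ne_zero.2 hn)] }
  exact Module.Baer.of_divisible M

/-! ### Odd functions on ordered groups -/

section Odd

variable {G M : Type*} [AddCommGroup G] [LinearOrder G] [IsOrderedAddMonoid G] [AddCommGroup M]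

/-- The extension of a function on the positive cone to an odd function vanishing at `0`. -/
def oddExtension (ψ : {x : G // 0 < x} → M) (x : G) : M :=
  if h : 0 < x then ψ ⟨x, h⟩ else if h : x < 0 then -ψ ⟨-x, neg_pos.2 h⟩ else 0

@[simp]
lemma oddExtension_coe (ψ : {x : G // 0 < x} → M) (x : {x : G // 0 < x}) :
    oddExtension ψ x = ψ x := dif_pos x.2

@[simp]
lemma oddExtension_zero (ψ : {x : G // 0 < x} → M) : oddExtension ψ 0 = 0 := by
  simp [oddExtension]

lemma oddExtension_odd (ψ : {x : G // 0 < x} → M) : (oddExtension ψ).Odd := by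
  intro x
  rcases lt_trichotomy x 0 with hx | rfl | hx
  · simp [oddExtension, hx, hx.not_gt]
  · simp
  · simp [oddExtension, hx, hx.not_gt]

lemma map_add_of_odd_of_map_add_pos {f : G → M} (hodd : f.Odd) (hzero : f 0 = 0)
    (hadd : ∀ x y, 0 < x → 0 < y → f (x + y) = f x + f y) (x y : G) : f (x + y) = f x + f y := by
  have map_add_nonneg {a b : G} (ha : 0 ≤ a) (hb : 0 ≤ b) : f (a + b) = f a + f b := by
    rcases ha.eq_or_lt with rfl | ha
    · simp [hzero]
    rcases hb.eq_or_lt with rfl | hb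
    · simp [hzero]
    exact hadd a b ha hb
  have map_sub_of_le {a b : G} (hb : 0 ≤ b) (hba : b ≤ a) : f (a - b) = f a - f b := by
    rw [eq_sub_iff_add_eq, ← map_add_nonneg (sub_nonneg.2 hba) hb, sub_add_cancel]
  have map_sub_nonneg {a b : G} (ha : 0 ≤ a) (hb : 0 ≤ b) : f (a - b) = f a - f b := by
    rcases le_total b a with hba | hab
    · exact map_sub_of_le hb hba
    · rw [← neg_sub b a, hodd, map_sub_of_le ha hab, neg_sub]
  have map_eq (a : G) : f a = f a⁺ - f a⁻ := by
    rw [← map_sub_nonneg (posPart_nonneg a) (negPart_nonneg a), posPart_sub_negPart]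
  calc
    f (x + y) = f (x⁺ + y⁺ - (x⁻ + y⁻)) := by
      rw [add_sub_add_comm, posPart_sub_negPart, posPart_sub_negPart]
    _ = f (x⁺ + y⁺) - f (x⁻ + y⁻) :=
      map_sub_nonneg (add_nonneg (posPart_nonneg x) (posPart_nonneg y))
        (add_nonneg (negPart_nonneg x) (negPart_nonneg y))
    _ = f x + f y := by
      rw [map_add_nonneg (posPart_nonneg x) (posPart_nonneg y),
        map_add_nonneg (negPart_nonneg x) (negPart_nonneg y), map_eq x, map_eq y,
        add_sub_add_comm]

end Odd

/-! ### Commutative square-zero extensions -/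

section Harrison

variable {R M : Type*} [CommRing R] [AddCommGroup M] [Module R M]

/-- `D` is a Harrison 2-cocycle, that is, a symmetric Hochschild 2-cocycle, on the commutative ring
`R` with values in the module `M`. -/
structure IsHarrisonCocycle (D : R →+ R →+ M) : Prop where
  comm : ∀ x y, D x y = D y x
  cocycle : ∀ x y z, x • D y z + D x (y * z) = z • D x y + D (x * y) z

variable {D : R →+ R →+ M}

lemma IsHarrisonCocycle.one_left (hD : IsHarrisonCocycle D) (x : R) : D 1 x = x • D 1 1 := by
  simpa using hD.cocycle 1 1 x

/-- The commutative square-zero extension of `R` by `M` attached to a Harrison cocycle `D`: the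
group `R × M` with the multiplication `(x, a) * (y, b) = (x * y, x • b + y • a + D x y)`. The type
depends on the cocycle property so that the instances below can find it. -/
def HarrisonExtension (_hD : IsHarrisonCocycle D) : Type _ := R × M

namespace HarrisonExtension

variable {hD : IsHarrisonCocycle D}

instance : AddCommGroup (HarrisonExtension hD) := inferInstanceAs (AddCommGroup (R × M))

instance : Mul (HarrisonExtension hD) where
  mul p q := (p.1 * q.1, p.1 • q.2 + q.1 • p.2 + D p.1 q.1)

-- The cocycle need not be normalized, whence the second coordinate of the unit.
instance : One (HarrisonExtension hD) where
  one := (1, -D 1 1)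

@[ext]
lemma ext {p q : HarrisonExtension hD} (hfst : p.1 = q.1) (hsnd : p.2 = q.2) : p = q :=
  Prod.ext hfst hsnd

@[simp] lemma fst_zero : (0 : HarrisonExtension hD).1 = 0 := rfl
@[simp] lemma snd_zero : (0 : HarrisonExtension hD).2 = 0 := rfl
@[simp] lemma fst_add (p q : HarrisonExtension hD) : (p + q).1 = p.1 + q.1 := rfl
@[simp] lemma snd_add (p q : HarrisonExtension hD) : (p + q).2 = p.2 + q.2 := rfl
@[simp] lemma fst_one : (1 : HarrisonExtension hD).1 = 1 := rfl
@[simp] lemma snd_one : (1 : HarrisonExtension hD).2 = -D 1 1 := rfl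
@[simp] lemma fst_mul (p q : HarrisonExtension hD) : (p * q).1 = p.1 * q.1 := rfl
@[simp] lemma snd_mul (p q : HarrisonExtension hD) :
    (p * q).2 = p.1 • q.2 + q.1 • p.2 + D p.1 q.1 := rfl

protected lemma mul_comm (p q : HarrisonExtension hD) : p * q = q * p := by
  ext
  · simp only [fst_mul, mul_comm]
  · simp only [snd_mul, hD.comm p.1 q.1, add_comm (p.1 • q.2)]

protected lemma mul_assoc (p q r : HarrisonExtension hD) : p * q * r = p * (q * r) := by
  ext
  · simp only [fst_mul, mul_assoc]
  · simp only [snd_mul, fst_mul]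
    linear_combination (norm := module) -hD.cocycle p.1 q.1 r.1

protected lemma one_mul (p : HarrisonExtension hD) : 1 * p = p := by
  ext
  · simp
  · simp [hD.one_left p.1]

protected lemma mul_add (p q r : HarrisonExtension hD) : p * (q + r) = p * q + p * r := by
  ext
  · simp only [fst_mul, fst_add, mul_add]
  · simp only [snd_mul, fst_add, snd_add, map_add]
    module

protected lemma mul_zero (p : HarrisonExtension hD) : p * 0 = 0 := by
  ext <;> simp

instance : CommRing (HarrisonExtension hD) where
  __ := (inferInstance : AddCommGroup (HarrisonExtension hD))
  mul_assoc := HarrisonExtension.mul_assoc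
  mul_comm := HarrisonExtension.mul_comm
  one_mul := HarrisonExtension.one_mul
  mul_one p := by rw [HarrisonExtension.mul_comm, HarrisonExtension.one_mul]
  left_distrib := HarrisonExtension.mul_add
  right_distrib p q r := by simp only [HarrisonExtension.mul_comm _ r, HarrisonExtension.mul_add]
  mul_zero := HarrisonExtension.mul_zero
  zero_mul p := by rw [HarrisonExtension.mul_comm, HarrisonExtension.mul_zero]

/-- The projection of the extension onto its base ring. -/
def proj (hD : IsHarrisonCocycle D) : HarrisonExtension hD →+* R where
  toFun := Prod.fst
  map_one' := rfl
  map_zero' := rfl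
  map_add' _ _ := rfl
  map_mul' _ _ := rfl

lemma proj_surjective : Surjective (proj hD) := Prod.fst_surjective

lemma ker_proj_sq : RingHom.ker (proj hD) ^ 2 = ⊥ := by
  rw [pow_two, eq_bot_iff, Ideal.mul_le]
  intro p (hp : p.1 = 0) q (hq : q.1 = 0)
  ext <;> simp [hp, hq]

lemma exists_section [FormallySmooth ℤ R] :
    ∃ σ : R →+* HarrisonExtension hD, ∀ x, (σ x).1 = x := by
  have hker : IsNilpotent (RingHom.ker (proj hD).toIntAlgHom) := ⟨2, ker_proj_sq⟩
  exact ⟨FormallySmooth.liftOfSurjective (AlgHom.id ℤ R) (proj hD).toIntAlgHom proj_surjective hker,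
    FormallySmooth.liftOfSurjective_apply (AlgHom.id ℤ R) _ proj_surjective hker⟩

end HarrisonExtension

theorem IsHarrisonCocycle.exists_eq_coboundary [FormallySmooth ℤ R] (hD : IsHarrisonCocycle D) :
    ∃ β : R →+ M, ∀ x y, D x y = β (x * y) - x • β y - y • β x := by
  obtain ⟨σ, hσ⟩ := HarrisonExtension.exists_section (hD := hD)
  refine ⟨AddMonoidHom.mk' (fun x ↦ (σ x).2) fun x y ↦ ?_, fun x y ↦ ?_⟩
  · rw [map_add, HarrisonExtension.snd_add]
  · simp only [AddMonoidHom.mk'_apply, map_mul, HarrisonExtension.snd_mul, hσ]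
    abel

/-- The failure of `ψ` to satisfy the Leibniz rule. -/
def leibnizDefect (ψ : R → M) (x y : R) : M :=
  ψ (x * y) - x • ψ y - y • ψ x

lemma leibnizDefect_comm (ψ : R → M) (x y : R) : leibnizDefect ψ x y = leibnizDefect ψ y x := by
  simp only [leibnizDefect, mul_comm x y, sub_right_comm]

lemma leibnizDefect_odd {ψ : R → M} (hψ : ψ.Odd) (x : R) : (leibnizDefect ψ x).Odd := by
  intro y
  simp only [leibnizDefect, mul_neg, hψ.eq]
  module

lemma exists_leibniz_sub_addMonoidHom [FormallySmooth ℤ R] (ψ : R → M)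
    (hψ : ∀ x y z, leibnizDefect ψ x (y + z) = leibnizDefect ψ x y + leibnizDefect ψ x z) :
    ∃ β : R →+ M, ∀ x y, leibnizDefect (ψ - ⇑β) x y = 0 := by
  let D : R →+ R →+ M := AddMonoidHom.mk' (fun x ↦ AddMonoidHom.mk' (leibnizDefect ψ x) (hψ x))
    fun x y ↦ by
      ext z
      simpa [leibnizDefect_comm ψ z] using hψ z x y
  have hD : IsHarrisonCocycle D :=
    { comm := leibnizDefect_comm ψ
      cocycle x y z := by
        simp only [D, AddMonoidHom.mk'_apply, leibnizDefect, mul_assoc]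
        module }
  obtain ⟨β, hβ⟩ := hD.exists_eq_coboundary
  refine ⟨β, fun x y ↦ ?_⟩
  have h : leibnizDefect ψ x y = leibnizDefect β x y := hβ x y
  simp only [leibnizDefect, Pi.sub_apply] at h ⊢
  linear_combination (norm := module) h

end Harrison

lemma formallySmooth_int_of_charZero (K : Type*) [Field K] [CharZero K] : FormallySmooth ℤ K := by
  have : FormallySmooth ℤ ℚ := .of_isLocalization (nonZeroDivisors ℤ)
  have : FormallySmooth ℚ K := by
    obtain ⟨s, hs⟩ := exists_isTranscendenceBasis ℚ K
    have := hs.isAlgebraic_field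
    exact .of_algebraicIndependent_of_isSeparable hs.1
  exact .comp ℤ ℚ K

/-! ### The entropy equation -/

lemma isSymmAddCocycle_of_entropy_equation {G M : Type*} [AddCommMonoid G] [Preorder G]
    [AddLeftStrictMono G] [AddCommGroup M] {H : G → G → G → M}
    (hswap : ∀ x y, 0 < x → 0 < y → H x y 0 = H y x 0)
    (hrotate : ∀ x y z, 0 < x → 0 < y → 0 < z → H x y z = H y z x)
    (heq : ∀ x y z, 0 < x → 0 < y → 0 < z → H x y z = H (x + y) z 0 + H x y 0) :
    IsSymmAddCocycle fun x y : {x : G // 0 < x} ↦ H x y 0 where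
  comm x y := hswap x y x.2 y.2
  cocycle := by
    rintro ⟨x, hx⟩ ⟨y, hy⟩ ⟨z, hz⟩
    have hyz := add_pos hy hz
    calc
      H (x + y) z 0 + H x y 0 = H y z x := by rw [← heq x y z hx hy hz, hrotate x y z hx hy hz]
      _ = H x (y + z) 0 + H y z 0 := by rw [heq y z x hy hz hx, hswap _ x hyz hx]

section Entropy

variable {K M : Type*} [Field K] [LinearOrder K] [IsStrictOrderedRing K] [AddCommGroup M]
  [Module K M]

lemma leibnizDefect_add_of_homogeneous_coboundary {ψ : K → M} (hodd : ψ.Odd)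
    (hhom : ∀ t x y, 0 < t → 0 < x → 0 < y →
      ψ (t * x + t * y) - ψ (t * x) - ψ (t * y) = t • (ψ (x + y) - ψ x - ψ y)) (x y z : K) :
    leibnizDefect ψ x (y + z) = leibnizDefect ψ x y + leibnizDefect ψ x z := by
  have : IsAddTorsionFree M := .of_isTorsionFree K M
  have hzero : ψ 0 = 0 := hodd.map_zero
  have of_pos {t : K} (ht : 0 < t) :
      leibnizDefect ψ t (y + z) = leibnizDefect ψ t y + leibnizDefect ψ t z := by
    refine map_add_of_odd_of_map_add_pos (leibnizDefect_odd hodd t) ?_ (fun a b ha hb ↦ ?_) y z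
    · simp [leibnizDefect, hzero]
    · simp only [leibnizDefect, mul_add]
      linear_combination (norm := module) hhom t a b ht ha hb
  rcases lt_trichotomy x 0 with hx | rfl | hx
  · have neg_left (w : K) : leibnizDefect ψ x w = -leibnizDefect ψ (-x) w := by
      rw [leibnizDefect_comm, ← neg_neg x, leibnizDefect_odd hodd, leibnizDefect_comm, neg_neg]
    rw [neg_left, neg_left y, neg_left z, of_pos (neg_pos.2 hx), neg_add]
  · simp [leibnizDefect, hzero]
  · exact of_pos hx

theorem IsSymmAddCocycle.exists_leibniz_of_homogeneous {F : {x : K // 0 < x} → {x : K // 0 < x} → M}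
    (hF : IsSymmAddCocycle F) (hhom : ∀ t x y, F (t * x) (t * y) = (t : K) • F x y) :
    ∃ φ : K → M, (∀ x y, φ (x * y) = x • φ y + y • φ x) ∧
      ∀ x y, F x y = φ (x + y) - φ x - φ y := by
  obtain ⟨ψ, hψ⟩ := hF.exists_eq_coboundary (baer_int_of_charZero K M)
  have extend (x y : {x : K // 0 < x}) :
      F x y = oddExtension ψ (x + y) - oddExtension ψ x - oddExtension ψ y := by
    simpa only [← Positive.coe_add, oddExtension_coe] using hψ x y
  have := formallySmooth_int_of_charZero K
  obtain ⟨β, hβ⟩ := exists_leibniz_sub_addMonoidHom (oddExtension ψ) <|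
    leibnizDefect_add_of_homogeneous_coboundary (oddExtension_odd ψ)
      fun t x y ht hx hy ↦ by
        simpa only [extend, Positive.val_mul] using hhom ⟨t, ht⟩ ⟨x, hx⟩ ⟨y, hy⟩
  refine ⟨oddExtension ψ - β, fun x y ↦ ?_, fun x y ↦ ?_⟩
  · rw [← sub_eq_zero, ← sub_sub]
    exact hβ x y
  · simp only [Pi.sub_apply, map_add, extend]
    abel

theorem daroczy_entropy_equation_general (H : K → K → K → M)
    (hsym : ∀ x y z : K, 0 ≤ x → 0 ≤ y → 0 ≤ z → 0 < x + y + z →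
      ∀ σ : Equiv.Perm (Fin 3),
        H x y z = H (![x, y, z] (σ 0)) (![x, y, z] (σ 1)) (![x, y, z] (σ 2)))
    (heq : ∀ x y z : K, 0 < x → 0 < y → 0 < z → H x y z = H (x + y) 0 z + H x y 0)
    (hhom : ∀ t x y : K, 0 < t → 0 < x → 0 < y → H (t * x) (t * y) 0 = t • H x y 0) :
    ∃ φ : K → M,
      (∀ x y : K, 0 < x → 0 < y → φ (x * y) = x • φ y + y • φ x) ∧
      (∀ x y z : K, 0 < x → 0 < y → 0 < z →
        H x y z = φ (x + y + z) - φ x - φ y - φ z) := by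
  have entropy (x y z : K) (hx : 0 < x) (hy : 0 < y) (hz : 0 < z) :
      H x y z = H (x + y) z 0 + H x y 0 := by
    rw [heq x y z hx hy hz]
    congr 1
    exact hsym (x + y) 0 z (by positivity) le_rfl hz.le (by positivity) (Equiv.swap 1 2)
  have hF := isSymmAddCocycle_of_entropy_equation
    (fun x y hx hy ↦ hsym x y 0 hx.le hy.le le_rfl (by positivity) (Equiv.swap 0 1))
    (fun x y z hx hy hz ↦ hsym x y z hx.le hy.le hz.le (by positivity) (finRotate 3)) entropy
  obtain ⟨φ, leibniz, hφ⟩ := hF.exists_leibniz_of_homogeneous fun t x y ↦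
    hhom t x y t.2 x.2 y.2
  refine ⟨φ, fun x y _ _ ↦ leibniz x y, fun x y z hx hy hz ↦ ?_⟩
  rw [entropy x y z hx hy hz, hφ ⟨x, hx⟩ ⟨y, hy⟩, hφ ⟨x + y, add_pos hx hy⟩ ⟨z, hz⟩]
  abel

end Entropy

/-- Daróczy's theorem: if `H` is symmetric on `D`, satisfies the entropy equation
on the interior of `D`, and `(x,y) ↦ H(x,y,0)` is positively homogeneous of degree 1
on `ℝ₊₊²`, then `H(x,y,z) = φ(x+y+z) − φ(x) − φ(y) − φ(z)` on the interior of `D`,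
where `φ(xy) = x·φ(y) + y·φ(x)` for all `x, y > 0`. -/
theorem daroczy_entropy_equation
    (H : ℝ → ℝ → ℝ → ℝ)
    (hsym : ∀ x y z : ℝ, 0 ≤ x → 0 ≤ y → 0 ≤ z → 0 < x + y + z →
      ∀ σ : Equiv.Perm (Fin 3),
        H x y z = H (![x, y, z] (σ 0)) (![x, y, z] (σ 1)) (![x, y, z] (σ 2)))
    (heq : ∀ x y z : ℝ, 0 < x → 0 < y → 0 < z →
      H x y z = H (x + y) 0 z + H x y 0)
    (hhom : ∀ t x y : ℝ, 0 < t → 0 < x → 0 < y →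
      H (t * x) (t * y) 0 = t * H x y 0) :
    ∃ φ : ℝ → ℝ,
      (∀ x y : ℝ, 0 < x → 0 < y → φ (x * y) = x * φ y + y * φ x) ∧
      (∀ x y z : ℝ, 0 < x → 0 < y → 0 < z →
        H x y z = φ (x + y + z) - φ x - φ y - φ z) :=
  daroczy_entropy_equation_general H hsym heq hhom
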